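/- Let μ be a stationary deterministic policy, V ∈ F, and h ≥ 1 an integer, and assume A′_h < ∞. Then ‖T_μ^h V − V^μ‖_{1,ρ1} ≤ γ^h A′_h ‖V − V^μ‖_{1,ρ0}. -/

import Mathlib

open MeasureTheory
open scoped ENNReal

/-- Bellman operator for a fixed policy `π`:
`(T_π V)(s) = r(s, π s) + γ ∫ V ds' p(ds'|s, π s)`. -/
noncomputable def Tpol {S : Type*} [MeasurableSpace S] {A : Type*}
    (p : S → A → Measure S) (r : S → A → ℝ) (γ : ℝ) (π : S → A)
    (V : S → ℝ) : S → ℝ :=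
  fun s => r s (π s) + γ * ∫ s', V s' ∂(p s (π s))

/-- Bellman optimality operator:
`(T V)(s) = max_{a ∈ A} [ r(s,a) + γ ∫ V ds' p(ds'|s,a) ]`. -/
noncomputable def Tbell {S : Type*} [MeasurableSpace S] {A : Type*}
    (p : S → A → Measure S) (r : S → A → ℝ) (γ : ℝ)
    (V : S → ℝ) : S → ℝ :=
  fun s => ⨆ a : A, (r s a + γ * ∫ s', V s' ∂(p s a))

/-- Right action of a policy's transition operator on measures: `ν P_π`. -/
noncomputable def Pmeas {S : Type*} [MeasurableSpace S] {A : Type*}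
    (p : S → A → Measure S) (π : S → A) (ν : Measure S) : Measure S :=
  ν.bind fun s => p s (π s)

/-- Left action of a policy's transition operator on functions:
`(P_π V)(s) = ∫ V ds' p(ds'|s, π s)`. -/
noncomputable def Pfun {S : Type*} [MeasurableSpace S] {A : Type*}
    (p : S → A → Measure S) (π : S → A) (V : S → ℝ) : S → ℝ :=
  fun s => ∫ s', V s' ∂(p s (π s))

/-- `‖f‖_{1,μ} = ∫ |f| dμ`. -/
noncomputable def L1 {S : Type*} [MeasurableSpace S] (f : S → ℝ) (μ : Measure S) : ℝ :=
  ∫ s, |f s| ∂μ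

/-- Supremum norm `‖f‖_∞`. -/
noncomputable def supNorm {S : Type*} (f : S → ℝ) : ℝ := ⨆ s, |f s|

/-- The measure `ρ P_{μ_1} P_{μ_2} ⋯ P_{μ_m}` obtained by applying the transition
operators of a list of policies in succession, starting from `ρ`. -/
noncomputable def pushPol {S : Type*} [MeasurableSpace S] {A : Type*}
    (p : S → A → Measure S) (ρ : Measure S) (μs : List (S → A)) : Measure S :=
  μs.foldl (fun ν π => Pmeas p π ν) ρ

/-- The `m`-step concentrability coefficient: the supremum over all sequences of `m`
measurable policies of the essential supremum of the Radon–Nikodym derivative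
`d(base P_{μ_1} ⋯ P_{μ_m}) / d(ref)`.  (For `m = 0` it is `ess sup d(base)/d(ref)`.) -/
noncomputable def Aconc {S : Type*} [MeasurableSpace S] {A : Type*} [MeasurableSpace A]
    (p : S → A → Measure S) (base ref : Measure S) (m : ℕ) : ℝ≥0∞ :=
  ⨆ μs : Fin m → {π : S → A // Measurable π},
    essSup ((pushPol p base (List.ofFn fun i => (μs i).1)).rnDeriv ref) ref

/-- The unnormalized measure `Λ = ν (P_{πs})^m ∑_{j=0}^∞ γ^j (P_{πn})^j`, i.e. `ν`
pushed `m` times through `P_{πs}` and then through the Neumann series for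
`[I - γ P_{πn}]⁻¹`. -/
noncomputable def Lam {S : Type*} [MeasurableSpace S] {A : Type*}
    (p : S → A → Measure S) (γ : ℝ) (ν : Measure S) (πs πn : S → A) (m : ℕ) : Measure S :=
  Measure.sum fun j : ℕ =>
    ENNReal.ofReal (γ ^ j) • (fun μ => Pmeas p πn μ)^[j] ((fun μ => Pmeas p πs μ)^[m] ν)

/-!
Let `P` be the transition operator of the policy `μ`. Since `V^μ` is a fixed point of the affine map
`T_μ = r + γ P`, each application of `T_μ` multiplies the error `V - V^μ` by `γ P`. As
`|P f| ≤ P |f|`, the error after `h` steps, integrated against `ρ1`, is at most `|γ| ^ h` times the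
integral of `|V - V^μ|` against `ρ1 P^h`; and `ρ1 P^h ≤ A'_h • ρ0` as measures, because the density
of `ρ1 P^h` with respect to `ρ0` is essentially bounded by `A'_h`. With `[0, ∞]`-valued integrals
this needs no integrability of the iterates beforehand: it is a consequence of the bound.
-/

open ProbabilityTheory

section Transition

variable {S A : Type*} [MeasurableSpace S] {p : S → A → Measure S} {π : S → A}

/-- The transition kernel `P_π` of a policy `π`. Only the measurability of `s ↦ p s (π s)` is asked
for, so that no σ-algebra on the action space is involved. -/
noncomputable def policyKernel (p : S → A → Measure S) (π : S → A)
    (hπ : Measurable fun s => p s (π s)) : Kernel S S :=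
  ⟨fun s => p s (π s), hπ⟩

instance isMarkovKernel_policyKernel [∀ s a, IsProbabilityMeasure (p s a)]
    (hπ : Measurable fun s => p s (π s)) : IsMarkovKernel (policyKernel p π hπ) :=
  ⟨fun s => inferInstanceAs (IsProbabilityMeasure (p s (π s)))⟩

lemma measurable_transition [MeasurableSpace A] (hp : Measurable (Function.uncurry p))
    (hπ : Measurable π) : Measurable fun s => p s (π s) :=
  hp.comp (measurable_id.prodMk hπ)

lemma measurable_Pfun (hπ : Measurable fun s => p s (π s)) {W : S → ℝ} (hW : Measurable W) :
    Measurable (Pfun p π W) :=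
  (hW.stronglyMeasurable.integral_kernel (κ := policyKernel p π hπ)).measurable

lemma lintegral_Pmeas (hπ : Measurable fun s => p s (π s)) (ν : Measure S) {f : S → ℝ≥0∞}
    (hf : Measurable f) : ∫⁻ s, f s ∂Pmeas p π ν = ∫⁻ s, ∫⁻ s', f s' ∂p s (π s) ∂ν :=
  Measure.lintegral_bind hπ.aemeasurable hf.aemeasurable

lemma sFinite_Pmeas [∀ s a, IsProbabilityMeasure (p s a)] (hπ : Measurable fun s => p s (π s))
    (ν : Measure S) [SFinite ν] : SFinite (Pmeas p π ν) :=
  inferInstanceAs (SFinite (ν.bind (policyKernel p π hπ)))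

lemma sFinite_pushPol [∀ s a, IsProbabilityMeasure (p s a)] {πs : List (S → A)}
    (hπs : ∀ π ∈ πs, Measurable fun s => p s (π s)) (ν : Measure S) [SFinite ν] :
    SFinite (pushPol p ν πs) := by
  induction πs generalizing ν with
  | nil => assumption
  | cons π πs ih =>
    rw [List.forall_mem_cons] at hπs
    have := sFinite_Pmeas hπs.1 ν
    exact ih hπs.2 (Pmeas p π ν)

end Transition

section Concentrability

lemma le_essSup_rnDeriv_smul {α : Type*} [MeasurableSpace α] {ν ρ : Measure α}
    [ν.HaveLebesgueDecomposition ρ] (hac : ν ≪ ρ) : ν ≤ essSup (ν.rnDeriv ρ) ρ • ρ :=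
  calc ν = ρ.withDensity (ν.rnDeriv ρ) := (Measure.withDensity_rnDeriv_eq ν ρ hac).symm
    _ ≤ ρ.withDensity fun _ => essSup (ν.rnDeriv ρ) ρ :=
      withDensity_mono (ENNReal.ae_le_essSup _)
    _ = essSup (ν.rnDeriv ρ) ρ • ρ := withDensity_const _

variable {S A : Type*} [MeasurableSpace S] [MeasurableSpace A] {p : S → A → Measure S}
  {πs : List (S → A)}

lemma essSup_rnDeriv_pushPol_le_Aconc (hπs : ∀ π ∈ πs, Measurable π) (base ref : Measure S) :
    essSup ((pushPol p base πs).rnDeriv ref) ref ≤ Aconc p base ref πs.length := by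
  let policies : Fin πs.length → {π : S → A // Measurable π} :=
    fun i => ⟨πs.get i, hπs _ (πs.get_mem i)⟩
  have hofFn : (List.ofFn fun i => (policies i).1) = πs := List.ofFn_get πs
  calc essSup ((pushPol p base πs).rnDeriv ref) ref
      = essSup ((pushPol p base (List.ofFn fun i => (policies i).1)).rnDeriv ref) ref := by
        rw [hofFn]
    _ ≤ Aconc p base ref πs.length :=
      le_iSup (fun μs : Fin πs.length → {π : S → A // Measurable π} =>
        essSup ((pushPol p base (List.ofFn fun i => (μs i).1)).rnDeriv ref) ref) policies

lemma pushPol_le_Aconc_smul [∀ s a, IsProbabilityMeasure (p s a)]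
    (hp : Measurable (Function.uncurry p)) (hπs : ∀ π ∈ πs, Measurable π) {base ref : Measure S}
    [SFinite base] [SigmaFinite ref] (hac : pushPol p base πs ≪ ref) :
    pushPol p base πs ≤ Aconc p base ref πs.length • ref := by
  have : SFinite (pushPol p base πs) :=
    sFinite_pushPol (fun π hπ => measurable_transition hp (hπs π hπ)) base
  refine (le_essSup_rnDeriv_smul hac).trans ?_
  gcongr
  exact essSup_rnDeriv_pushPol_le_Aconc hπs base ref

end Concentrability

section Evaluation

variable {S A : Type*} [MeasurableSpace S] {p : S → A → Measure S} {r : S → A → ℝ} {γ : ℝ}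
  {π : S → A} {U W : S → ℝ}

lemma measurable_Tpol (hπ : Measurable fun s => p s (π s)) (hr : Measurable fun s => r s (π s))
    (hW : Measurable W) : Measurable (Tpol p r γ π W) :=
  hr.add ((measurable_Pfun hπ hW).const_mul γ)

lemma measurable_reward_of_isFixedPt_Tpol (hπ : Measurable fun s => p s (π s))
    (hU : Measurable U) (hfix : Function.IsFixedPt (Tpol p r γ π) U) :
    Measurable fun s => r s (π s) := by
  have hreward : (fun s => r s (π s)) = fun s => U s - γ * Pfun p π U s :=
    funext fun s => eq_sub_of_add_eq (congrFun hfix s)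
  rw [hreward]
  exact hU.sub ((measurable_Pfun hπ hU).const_mul γ)

lemma measurable_iterate_Tpol
    (hπ : Measurable fun s => p s (π s)) (hr : Measurable fun s => r s (π s))
    (hW : Measurable W) (n : ℕ) : Measurable ((Tpol p r γ π)^[n] W) :=
  Function.Iterate.rec Measurable hW (fun _ => measurable_Tpol hπ hr) n

lemma Tpol_sub_Tpol {s : S} (hW : Integrable W (p s (π s))) (hU : Integrable U (p s (π s))) :
    Tpol p r γ π W s - Tpol p r γ π U s = γ * ∫ s', (W s' - U s') ∂p s (π s) := by
  rw [integral_sub hW hU, Tpol, Tpol]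
  ring

lemma enorm_Tpol_sub_Tpol_le {s : S} (hW : AEStronglyMeasurable W (p s (π s)))
    (hU : Integrable U (p s (π s))) :
    ‖Tpol p r γ π W s - Tpol p r γ π U s‖ₑ ≤ ‖γ‖ₑ * ∫⁻ s', ‖W s' - U s'‖ₑ ∂p s (π s) := by
  -- If `W` is not integrable, the integral in `Tpol` has the junk value `0`; this is harmless
  -- because then the right-hand side is infinite (or `γ = 0`).
  rcases eq_or_ne γ 0 with rfl | hγ
  · simp [Tpol]
  by_cases hfin : ∫⁻ s', ‖W s' - U s'‖ₑ ∂p s (π s) = ⊤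
  · simp [hfin, hγ]
  have hsub : Integrable (fun s' => W s' - U s') (p s (π s)) :=
    ⟨hW.sub hU.aestronglyMeasurable, lt_top_iff_ne_top.2 hfin⟩
  have hWint : Integrable W (p s (π s)) := by
    simpa only [sub_add_cancel] using hsub.fun_add hU
  rw [Tpol_sub_Tpol hWint hU, enorm_mul]
  gcongr
  exact enorm_integral_le_lintegral_enorm _

lemma lintegral_enorm_Tpol_sub_Tpol_le (hπ : Measurable fun s => p s (π s)) (hW : Measurable W)
    (hU : Measurable U) (hUint : ∀ s, Integrable U (p s (π s))) (ν : Measure S) :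
    ∫⁻ s, ‖Tpol p r γ π W s - Tpol p r γ π U s‖ₑ ∂ν
      ≤ ‖γ‖ₑ * ∫⁻ s, ‖W s - U s‖ₑ ∂Pmeas p π ν := by
  rw [lintegral_Pmeas hπ ν (hW.fun_sub hU).enorm, ← lintegral_const_mul' _ _ enorm_ne_top]
  exact lintegral_mono fun s => enorm_Tpol_sub_Tpol_le hW.aestronglyMeasurable (hUint s)

lemma lintegral_enorm_iterate_Tpol_sub_le (hπ : Measurable fun s => p s (π s))
    (hW : Measurable W) (hU : Measurable U)
    (hUint : ∀ s, Integrable U (p s (π s))) (hfix : Function.IsFixedPt (Tpol p r γ π) U)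
    (n : ℕ) (ν : Measure S) :
    ∫⁻ s, ‖(Tpol p r γ π)^[n] W s - U s‖ₑ ∂ν
      ≤ ‖γ‖ₑ ^ n * ∫⁻ s, ‖W s - U s‖ₑ ∂pushPol p ν (List.replicate n π) := by
  induction n generalizing ν with
  | zero => simp [pushPol]
  | succ n ih =>
    have hmeas : Measurable ((Tpol p r γ π)^[n] W) :=
      measurable_iterate_Tpol hπ (measurable_reward_of_isFixedPt_Tpol hπ hU hfix) hW n
    calc ∫⁻ s, ‖(Tpol p r γ π)^[n + 1] W s - U s‖ₑ ∂ν
        = ∫⁻ s, ‖Tpol p r γ π ((Tpol p r γ π)^[n] W) s - Tpol p r γ π U s‖ₑ ∂ν := by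
          rw [Function.iterate_succ_apply', hfix.eq]
      _ ≤ ‖γ‖ₑ * ∫⁻ s, ‖(Tpol p r γ π)^[n] W s - U s‖ₑ ∂Pmeas p π ν :=
          lintegral_enorm_Tpol_sub_Tpol_le hπ hmeas hU hUint ν
      _ ≤ ‖γ‖ₑ * (‖γ‖ₑ ^ n *
            ∫⁻ s, ‖W s - U s‖ₑ ∂pushPol p (Pmeas p π ν) (List.replicate n π)) := by
          gcongr
          exact ih (Pmeas p π ν)
      _ = ‖γ‖ₑ ^ (n + 1) * ∫⁻ s, ‖W s - U s‖ₑ ∂pushPol p ν (List.replicate (n + 1) π) := by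
          rw [pow_succ', mul_assoc]
          rfl

lemma ofReal_L1 {ν : Measure S} {f : S → ℝ} (hf : Integrable f ν) :
    ENNReal.ofReal (L1 f ν) = ∫⁻ s, ‖f s‖ₑ ∂ν :=
  ofReal_integral_norm_eq_lintegral_enorm hf

end Evaluation

theorem policy_h_step_evaluation_error_general
    {S : Type*} [MeasurableSpace S] {A : Type*} [MeasurableSpace A]
    (p : S → A → Measure S) (r : S → A → ℝ) (γ : ℝ)
    (hp : ∀ s a, IsProbabilityMeasure (p s a))
    (hpm : Measurable (Function.uncurry p))
    (ρ0 ρ1 : Measure S) [SigmaFinite ρ0] [SFinite ρ1]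
    (μ : S → A) (hμ : Measurable μ)
    (V : S → ℝ) (hVm : Measurable V)
    (Vμ : S → ℝ) (hVμm : Measurable Vμ)
    (hVμint : ∀ s, Integrable Vμ (p s (μ s)))
    (hVμfix : Tpol p r γ μ Vμ = Vμ)
    (hint : Integrable (fun s => V s - Vμ s) ρ0)
    (h : ℕ)
    (habs : pushPol p ρ1 (List.replicate h μ) ≪ ρ0)
    (hA : Aconc p ρ1 ρ0 h ≠ ⊤) :
    Integrable (fun s => (Tpol p r γ μ)^[h] V s - Vμ s) ρ1 ∧
      L1 (fun s => (Tpol p r γ μ)^[h] V s - Vμ s) ρ1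
        ≤ |γ| ^ h * (Aconc p ρ1 ρ0 h).toReal * L1 (fun s => V s - Vμ s) ρ0 := by
  have hκ : Measurable fun s => p s (μ s) := measurable_transition hpm hμ
  have hmeas : Measurable ((Tpol p r γ μ)^[h] V) :=
    measurable_iterate_Tpol hκ (measurable_reward_of_isFixedPt_Tpol hκ hVμm hVμfix) hVm h
  have hpush : pushPol p ρ1 (List.replicate h μ) ≤ Aconc p ρ1 ρ0 h • ρ0 := by
    simpa only [List.length_replicate] using
      pushPol_le_Aconc_smul hpm (fun π hπ => List.eq_of_mem_replicate hπ ▸ hμ) habs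
  have hbound : ∫⁻ s, ‖(Tpol p r γ μ)^[h] V s - Vμ s‖ₑ ∂ρ1
      ≤ ENNReal.ofReal (|γ| ^ h * (Aconc p ρ1 ρ0 h).toReal * L1 (fun s => V s - Vμ s) ρ0) :=
    calc ∫⁻ s, ‖(Tpol p r γ μ)^[h] V s - Vμ s‖ₑ ∂ρ1
        ≤ ‖γ‖ₑ ^ h * ∫⁻ s, ‖V s - Vμ s‖ₑ ∂pushPol p ρ1 (List.replicate h μ) :=
          lintegral_enorm_iterate_Tpol_sub_le hκ hVm hVμm hVμint hVμfix h ρ1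
      _ ≤ ‖γ‖ₑ ^ h * ∫⁻ s, ‖V s - Vμ s‖ₑ ∂(Aconc p ρ1 ρ0 h • ρ0) := by gcongr
      _ = ENNReal.ofReal (|γ| ^ h * (Aconc p ρ1 ρ0 h).toReal *
            L1 (fun s => V s - Vμ s) ρ0) := by
          rw [lintegral_smul_measure, smul_eq_mul, ENNReal.ofReal_mul (by positivity),
            ENNReal.ofReal_mul (by positivity), ENNReal.ofReal_pow (abs_nonneg γ),
            ENNReal.ofReal_toReal hA, ofReal_L1 hint, Real.enorm_eq_ofReal_abs, mul_assoc]
  have hintT : Integrable (fun s => (Tpol p r γ μ)^[h] V s - Vμ s) ρ1 :=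
    ⟨(hmeas.sub hVμm).aestronglyMeasurable, hbound.trans_lt ENNReal.ofReal_lt_top⟩
  have hL1 : 0 ≤ L1 (fun s => V s - Vμ s) ρ0 := integral_nonneg fun _ => abs_nonneg _
  refine ⟨hintT, (ENNReal.ofReal_le_ofReal_iff (by positivity)).1 ?_⟩
  rwa [ofReal_L1 hintT]

theorem policy_h_step_evaluation_error
    {S : Type*} [MeasurableSpace S] {A : Type*} [MeasurableSpace A] [Fintype A] [Nonempty A]
    (p : S → A → Measure S) (r : S → A → ℝ) (γ Rmax : ℝ)
    (hp : ∀ s a, IsProbabilityMeasure (p s a))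
    (hpm : Measurable (Function.uncurry p))
    (hr : ∀ s a, r s a ∈ Set.Icc (0 : ℝ) Rmax)
    (hγ : γ ∈ Set.Ico (0 : ℝ) 1)
    (ρ0 ρ1 : Measure S) [IsProbabilityMeasure ρ0] [IsProbabilityMeasure ρ1]
    (habs : ∀ μs : List (S → A), (∀ π ∈ μs, Measurable π) → pushPol p ρ1 μs ≪ ρ0)
    (μ : S → A) (hμ : Measurable μ)
    (V : S → ℝ) (hVm : Measurable V) (hVb : ∀ s, V s ∈ Set.Icc (0 : ℝ) (Rmax / (1 - γ)))
    (Vμ : S → ℝ) (hVμm : Measurable Vμ)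
    (hVμb : ∀ s, Vμ s ∈ Set.Icc (0 : ℝ) (Rmax / (1 - γ)))
    (hVμfix : Tpol p r γ μ Vμ = Vμ)
    (h : ℕ) (hh : 1 ≤ h)
    (hA : Aconc p ρ1 ρ0 h ≠ ⊤) :
    L1 (fun s => (Tpol p r γ μ)^[h] V s - Vμ s) ρ1
      ≤ γ ^ h * (Aconc p ρ1 ρ0 h).toReal * L1 (fun s => V s - Vμ s) ρ0 := by
  have hint {U : S → ℝ} (hUm : Measurable U) (hUb : ∀ s, U s ∈ Set.Icc 0 (Rmax / (1 - γ)))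
      (ν : Measure S) [IsProbabilityMeasure ν] : Integrable U ν :=
    .of_mem_Icc _ _ hUm.aemeasurable (ae_of_all _ hUb)
  simpa only [abs_of_nonneg hγ.1] using
    (policy_h_step_evaluation_error_general p r γ hp hpm ρ0 ρ1 μ hμ V hVm Vμ hVμm
      (fun s => hint hVμm hVμb (p s (μ s))) hVμfix ((hint hVm hVb ρ0).sub (hint hVμm hVμb ρ0)) h
      (habs _ fun π hπ => List.eq_of_mem_replicate hπ ▸ hμ) hA).2
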